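/- Let ω : ℕ → ℝ satisfy: ω(n) > 0 and ω(n) ≤ n for all n ≥ 1, and ω(mn) ≤ ω(m)ω(n) for all m, n ≥ 1 (submultiplicativity). If the limit of log ω(n)/log n as n → ∞ exists and equals 1, then ω(n) = n for every n ≥ 1. -/

import Mathlib

open Filter Topology

/-!
For fixed `n`, submultiplicativity of `ω` makes `k ↦ log ω(n ^ k)` subadditive. By Fekete's lemma
`log ω(n ^ k) / k` converges to its infimum over `k ≥ 1`, and the hypothesis that
`log ω(m) / log m → α`, read along the powers `m = n ^ k`, identifies this limit as `α log n`.
The term `k = 1` is therefore at least `α log n`, that is, `n ^ α ≤ ω(n)`.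
-/

theorem subadditive_log_of_submultiplicative {v : ℕ → ℝ} (hpos : ∀ k, 0 < v k)
    (hsub : ∀ k l, v (k + l) ≤ v k * v l) : Subadditive fun k ↦ Real.log (v k) := fun k l ↦
  calc
    Real.log (v (k + l)) ≤ Real.log (v k * v l) := Real.log_le_log (hpos _) (hsub k l)
    _ = Real.log (v k) + Real.log (v l) := Real.log_mul (hpos k).ne' (hpos l).ne'

theorem le_div_of_subadditive_of_tendsto {u : ℕ → ℝ} {L : ℝ} (hu : Subadditive u)
    (hlim : Tendsto (fun k : ℕ ↦ u k / k) atTop (𝓝 L)) {k : ℕ} (hk : k ≠ 0) : L ≤ u k / k := by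
  have hbdd : BddBelow (Set.range fun k : ℕ ↦ u k / k) := hlim.bddBelow_range
  have hL : L = hu.lim := tendsto_nhds_unique hlim (hu.tendsto_lim hbdd)
  exact hL.trans_le (hu.lim_le_div hbdd hk)

theorem tendsto_log_pow_div_of_tendsto_log_div_log {ω : ℕ → ℝ} {α : ℝ}
    (hlim : Tendsto (fun n : ℕ ↦ Real.log (ω n) / Real.log n) atTop (𝓝 α))
    {n : ℕ} (hn : 1 ≤ n) :
    Tendsto (fun k : ℕ ↦ Real.log (ω (n ^ k)) / k) atTop (𝓝 (α * Real.log n)) := by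
  obtain rfl | hn := hn.eq_or_lt
  · simpa using tendsto_const_div_atTop_nhds_zero_nat (Real.log (ω 1))
  · have hlog : Real.log n ≠ 0 := (Real.log_pos (Nat.one_lt_cast.2 hn)).ne'
    have hpow := (hlim.comp (tendsto_pow_atTop_atTop_of_one_lt hn)).mul_const (Real.log n)
    refine hpow.congr fun k ↦ ?_
    rw [Function.comp_apply, Nat.cast_pow, Real.log_pow, ← div_div, div_mul_cancel₀ _ hlog]

theorem rpow_le_of_submultiplicative_of_tendsto {ω : ℕ → ℝ} {α : ℝ}
    (hpos : ∀ n : ℕ, 1 ≤ n → 0 < ω n)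
    (hsub : ∀ m n : ℕ, 1 ≤ m → 1 ≤ n → ω (m * n) ≤ ω m * ω n)
    (hlim : Tendsto (fun n : ℕ ↦ Real.log (ω n) / Real.log n) atTop (𝓝 α))
    {n : ℕ} (hn : 1 ≤ n) : (n : ℝ) ^ α ≤ ω n := by
  have hpow : ∀ k, 1 ≤ n ^ k := fun k ↦ Nat.one_le_pow k n hn
  have hsubadd : Subadditive fun k ↦ Real.log (ω (n ^ k)) :=
    subadditive_log_of_submultiplicative (fun k ↦ hpos _ (hpow k)) fun k l ↦ by
      simpa only [pow_add] using hsub _ _ (hpow k) (hpow l)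
  have hlog : α * Real.log n ≤ Real.log (ω n) := by
    simpa using le_div_of_subadditive_of_tendsto hsubadd
      (tendsto_log_pow_div_of_tendsto_log_div_log hlim hn) one_ne_zero
  exact (Real.rpow_le_iff_le_log (Nat.cast_pos.2 hn) (hpos n hn)).2 hlog

theorem submultiplicative_rigidity_general (ω : ℕ → ℝ) (α : ℝ)
    (hpos : ∀ n : ℕ, 1 ≤ n → 0 < ω n)
    (hle : ∀ n : ℕ, 1 ≤ n → ω n ≤ (n : ℝ) ^ α)
    (hsub : ∀ m n : ℕ, 1 ≤ m → 1 ≤ n → ω (m * n) ≤ ω m * ω n)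
    (hlim : Tendsto (fun n : ℕ ↦ Real.log (ω n) / Real.log n) atTop (𝓝 α)) :
    ∀ n : ℕ, 1 ≤ n → ω n = (n : ℝ) ^ α := fun n hn ↦
  (hle n hn).antisymm (rpow_le_of_submultiplicative_of_tendsto hpos hsub hlim hn)

/-- If `ω : ℕ → ℝ` satisfies `0 < ω(n) ≤ n` for all `n ≥ 1`, is
submultiplicative (`ω(mn) ≤ ω(m)ω(n)` for `m, n ≥ 1`), and
`log ω(n)/log n → 1` as `n → ∞`, then `ω(n) = n` for every `n ≥ 1`. -/
theorem submultiplicative_rigidity (ω : ℕ → ℝ)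
    (hpos : ∀ n : ℕ, 1 ≤ n → 0 < ω n)
    (hle : ∀ n : ℕ, 1 ≤ n → ω n ≤ (n : ℝ))
    (hsub : ∀ m n : ℕ, 1 ≤ m → 1 ≤ n → ω (m * n) ≤ ω m * ω n)
    (hlim : Tendsto (fun n : ℕ => Real.log (ω n) / Real.log n) atTop (𝓝 1)) :
    ∀ n : ℕ, 1 ≤ n → ω n = (n : ℝ) := by
  simpa only [Real.rpow_one] using
    submultiplicative_rigidity_general ω 1 hpos (by simpa only [Real.rpow_one] using hle) hsub hlim
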